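/- Let n ≥ 1, let q₁, q₂ ∈ [1,∞] with 1 = 1/q₁ + 1/q₂, let α₁, α₂ ≥ 0, and set α = α₁/q₁ + α₂/q₂. Then for all locally integrable f₁, f₂ on ℝ^n with ‖f₁‖_{𝔏^{q₁,∞}(log 𝔏)^{α₁}} < ∞ and ‖f₂‖_{𝔏^{q₂,∞}(log 𝔏)^{α₂}} < ∞, one has ‖f₁ f₂‖_{𝔏^{1,∞}(log 𝔏)^α} ≤ ‖f₁‖_{𝔏^{q₁,∞}(log 𝔏)^{α₁}} · ‖f₂‖_{𝔏^{q₂,∞}(log 𝔏)^{α₂}}. -/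

import Mathlib

/-!
Splitting the weight as `w ^ (α / r) = w ^ (α₁ / q₁) * w ^ (α₂ / q₂)`, the bound is Hölder's
inequality on each set `E` of finite measure, where `w = log (e + 1 / |E|)`. Writing the norm as a
supremum of weighted `L^q(E)` seminorms makes this work for `q = ∞` as well, since there the
weight is trivial.
-/

open MeasureTheory Real Set ENNReal

noncomputable def logFac (s : ℝ) : ℝ := Real.log (Real.exp 1 + 1 / s)

/-- The weak Zygmund type norm `‖f‖_{𝔏^{q,∞}(log 𝔏)^α}` for an exponent
`q ∈ [1,∞]`; for `q = ∞` it is the `L^∞` norm. -/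
noncomputable def zygNormE (n : ℕ) (q : ℝ≥0∞) (α : ℝ)
    (f : EuclideanSpace ℝ (Fin n) → ℝ) : ℝ≥0∞ :=
  if q = ⊤ then eLpNorm f ⊤ volume
  else
    ⨆ s : Set.Ioi (0 : ℝ),
      (ENNReal.ofReal (logFac s.1) ^ α *
        ⨆ E : {E : Set (EuclideanSpace ℝ (Fin n)) //
            MeasurableSet E ∧ volume E = ENNReal.ofReal s.1},
          ∫⁻ x in E.1, ENNReal.ofReal (|f x| ^ q.toReal)) ^ (1 / q.toReal)

theorem logFac_pos {s : ℝ} (hs : 0 ≤ s) : 0 < logFac s :=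
  Real.log_pos <| (Real.one_lt_exp_iff.2 one_pos).trans_le <|
    le_add_of_nonneg_right (one_div_nonneg.2 hs)

section WeakZygmundNorm

variable {X F : Type*} [MeasurableSpace X] [NormedAddCommGroup F]

/-- The weak Zygmund type norm on a measure space, written uniformly in the exponent as the
supremum of `(log (e + 1 / μ E)) ^ (α / q) * ‖f‖_{L^q(E)}` over the measurable sets `E` of finite
measure. For `q = ∞` the weight is `1`. Null sets only contribute `0`, so they need not be
excluded. -/
noncomputable def weakZygmundNorm (q : ℝ≥0∞) (α : ℝ) (f : X → F) (μ : Measure X) : ℝ≥0∞ :=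
  ⨆ (E : Set X) (_ : MeasurableSet E) (_ : μ E ≠ ⊤),
    ENNReal.ofReal (logFac (μ.real E)) ^ (α * q⁻¹.toReal) * eLpNorm f q (μ.restrict E)

variable {μ : Measure X}

theorem logFac_rpow_mul_eLpNorm_restrict_le_weakZygmundNorm (q : ℝ≥0∞) (α : ℝ) (f : X → F)
    {E : Set X} (hE : MeasurableSet E) (hμE : μ E ≠ ⊤) :
    ENNReal.ofReal (logFac (μ.real E)) ^ (α * q⁻¹.toReal) * eLpNorm f q (μ.restrict E) ≤
      weakZygmundNorm q α f μ :=
  le_iSup₂_of_le E hE <| le_iSup_of_le hμE le_rfl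

theorem weakZygmundNorm_top [SigmaFinite μ] (α : ℝ) (f : X → F) :
    weakZygmundNorm ⊤ α f μ = eLpNorm f ⊤ μ := by
  apply le_antisymm
  · refine iSup₂_le fun E _ => iSup_le fun _ => ?_
    simpa only [ENNReal.inv_top, ENNReal.toReal_zero, mul_zero, ENNReal.rpow_zero, one_mul] using
      eLpNorm_mono_measure f Measure.restrict_le_self
  · have ae_le_on_spanningSets (k : ℕ) :
        ∀ᵐ x ∂μ.restrict (spanningSets μ k), ‖f x‖ₑ ≤ weakZygmundNorm ⊤ α f μ := by
      have norm_le := logFac_rpow_mul_eLpNorm_restrict_le_weakZygmundNorm ⊤ α f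
        (measurableSet_spanningSets μ k) (measure_spanningSets_lt_top μ k).ne
      simp only [ENNReal.inv_top, ENNReal.toReal_zero, mul_zero, ENNReal.rpow_zero, one_mul,
        eLpNorm_exponent_top] at norm_le
      exact (enorm_ae_le_eLpNormEssSup f _).mono fun x hx => hx.trans norm_le
    have ae_le := (ae_restrict_iUnion_iff _ _).2 ae_le_on_spanningSets
    rw [iUnion_spanningSets, Measure.restrict_univ] at ae_le
    exact eLpNorm_exponent_top.trans_le (eLpNormEssSup_le_of_ae_enorm_bound ae_le)

theorem lintegral_ofReal_abs_rpow_rpow_eq_eLpNorm {q : ℝ≥0∞} (hq : q ≠ 0) (hq' : q ≠ ⊤)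
    (f : X → ℝ) :
    (∫⁻ x, ENNReal.ofReal (|f x| ^ q.toReal) ∂μ) ^ (1 / q.toReal) = eLpNorm f q μ := by
  simp only [eLpNorm_eq_lintegral_rpow_enorm_toReal hq hq', Real.enorm_eq_ofReal_abs,
    ENNReal.ofReal_rpow_of_nonneg (abs_nonneg _) ENNReal.toReal_nonneg]

theorem zygNormE_eq_iSup_eLpNorm {n : ℕ} {q : ℝ≥0∞} (hq : q ≠ 0) (hq' : q ≠ ⊤) (α : ℝ)
    (f : EuclideanSpace ℝ (Fin n) → ℝ) :
    zygNormE n q α f =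
      ⨆ (s : Ioi (0 : ℝ)) (E : {E : Set (EuclideanSpace ℝ (Fin n)) //
          MeasurableSet E ∧ volume E = ENNReal.ofReal s.1}),
        ENNReal.ofReal (logFac s.1) ^ (α * q⁻¹.toReal) *
          eLpNorm f q (volume.restrict E.1) := by
  have hq_pos : 0 < 1 / q.toReal := one_div_pos.2 (ENNReal.toReal_pos hq hq')
  rw [zygNormE, if_neg hq']
  refine iSup_congr fun s => ?_
  rw [ENNReal.mul_iSup, ← ENNReal.orderIsoRpow_apply _ hq_pos, OrderIso.map_iSup]
  refine iSup_congr fun E => ?_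
  rw [ENNReal.orderIsoRpow_apply, ENNReal.mul_rpow_of_nonneg _ _ hq_pos.le,
    lintegral_ofReal_abs_rpow_rpow_eq_eLpNorm hq hq', ← ENNReal.rpow_mul, one_div,
    ENNReal.toReal_inv]

theorem zygNormE_eq_weakZygmundNorm {n : ℕ} {q : ℝ≥0∞} (hq : q ≠ 0) (α : ℝ)
    (f : EuclideanSpace ℝ (Fin n) → ℝ) :
    zygNormE n q α f = weakZygmundNorm q α f volume := by
  obtain rfl | hq' := eq_or_ne q ⊤
  · rw [weakZygmundNorm_top, zygNormE, if_pos rfl]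
  rw [zygNormE_eq_iSup_eLpNorm hq hq']
  apply le_antisymm
  · refine iSup₂_le fun ⟨s, hs⟩ ⟨E, hE, hEs⟩ => ?_
    obtain rfl : volume.real E = s := by
      rw [measureReal_def, hEs, ENNReal.toReal_ofReal (mem_Ioi.1 hs).le]
    exact logFac_rpow_mul_eLpNorm_restrict_le_weakZygmundNorm q α f hE
      (hEs ▸ ENNReal.ofReal_ne_top)
  · refine iSup₂_le fun E hE => iSup_le fun hE_fin => ?_
    obtain hE_null | hE_pos := eq_or_ne (volume E) 0
    · simp [Measure.restrict_eq_zero.2 hE_null]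
    · exact le_iSup₂_of_le ⟨volume.real E, ENNReal.toReal_pos hE_pos hE_fin⟩
        ⟨E, hE, (ofReal_measureReal hE_fin).symm⟩ le_rfl

theorem stmt7_general {𝕜 : Type*} [NormedRing 𝕜] [MulActionWithZero 𝕜 F] [IsBoundedSMul 𝕜 F]
    {q₁ q₂ r : ℝ≥0∞} [ENNReal.HolderTriple q₁ q₂ r] {α₁ α₂ α : ℝ}
    (hα : α * r⁻¹.toReal = α₁ * q₁⁻¹.toReal + α₂ * q₂⁻¹.toReal) {f₁ : X → 𝕜} {f₂ : X → F}
    (hf₁ : AEStronglyMeasurable f₁ μ) (hf₂ : AEStronglyMeasurable f₂ μ) :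
    weakZygmundNorm r α (fun x => f₁ x • f₂ x) μ ≤
      weakZygmundNorm q₁ α₁ f₁ μ * weakZygmundNorm q₂ α₂ f₂ μ := by
  refine iSup₂_le fun E hE => iSup_le fun hμE => ?_
  set w := ENNReal.ofReal (logFac (μ.real E))
  have w_ne_zero : w ≠ 0 := (ENNReal.ofReal_pos.2 (logFac_pos measureReal_nonneg)).ne'
  calc
    w ^ (α * r⁻¹.toReal) * eLpNorm (fun x => f₁ x • f₂ x) r (μ.restrict E)
    _ ≤ w ^ (α * r⁻¹.toReal) * (eLpNorm f₁ q₁ (μ.restrict E) * eLpNorm f₂ q₂ (μ.restrict E)) := by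
      gcongr
      exact eLpNorm_smul_le_mul_eLpNorm hf₂.restrict hf₁.restrict
    _ = (w ^ (α₁ * q₁⁻¹.toReal) * eLpNorm f₁ q₁ (μ.restrict E)) *
          (w ^ (α₂ * q₂⁻¹.toReal) * eLpNorm f₂ q₂ (μ.restrict E)) := by
      rw [hα, ENNReal.rpow_add _ _ w_ne_zero ENNReal.ofReal_ne_top, mul_mul_mul_comm]
    _ ≤ _ := by
      gcongr <;> exact logFac_rpow_mul_eLpNorm_restrict_le_weakZygmundNorm _ _ _ hE hμE

end WeakZygmundNorm

theorem stmt7 (n : ℕ) (hn : 1 ≤ n) (q₁ q₂ : ℝ≥0∞) (hq₁ : 1 ≤ q₁) (hq₂ : 1 ≤ q₂)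
    (hq : q₁⁻¹ + q₂⁻¹ = 1) (α₁ α₂ : ℝ) (hα₁ : 0 ≤ α₁) (hα₂ : 0 ≤ α₂)
    (α : ℝ) (hα : α = α₁ * q₁⁻¹.toReal + α₂ * q₂⁻¹.toReal)
    (f₁ f₂ : EuclideanSpace ℝ (Fin n) → ℝ)
    (h₁ : LocallyIntegrable f₁ volume) (h₂ : LocallyIntegrable f₂ volume)
    (hf₁ : zygNormE n q₁ α₁ f₁ < ⊤) (hf₂ : zygNormE n q₂ α₂ f₂ < ⊤) :
    zygNormE n 1 α (fun x => f₁ x * f₂ x) ≤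
      zygNormE n q₁ α₁ f₁ * zygNormE n q₂ α₂ f₂ := by
  have : ENNReal.HolderConjugate q₁ q₂ := ENNReal.holderConjugate_iff.2 hq
  simpa only [zygNormE_eq_weakZygmundNorm one_ne_zero,
    zygNormE_eq_weakZygmundNorm (one_pos.trans_le hq₁).ne',
    zygNormE_eq_weakZygmundNorm (one_pos.trans_le hq₂).ne', smul_eq_mul] using
    stmt7_general (r := 1) (by simpa using hα) h₁.aestronglyMeasurable
      h₂.aestronglyMeasurable
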